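/- Let t_1,...,t_N be independent Bernoulli random variables with P(t_l = 1) = p_l ∈ [0,1], and for i ≤ N write P_i(k, j) for the probability that, among the first i coordinates, the lazarus count equals k and the last one-position equals j. Suppose i ≥ 3 and p_{i-1} > 0. Then for every k with 2 ≤ k ≤ i - 2: P_i(k, i) = p_i · P_{i-1}(k, i-1) + p_i · ((1 - p_{i-1}) / p_{i-1}) · P_{i-1}(k-1, i-1). (This reduces the linear-size sum in the lazarus recurrence to a constant-size expression.) -/

import Mathlib

/-!
Once `t_i = 1`, a zero before `i` is lazarus exactly when some `1` precedes it, a condition on the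
first `i - 1` items only. Hence `P_i(k, i) = p_i * Q_i(k)`, where `Q_i(k)` is the probability that
`k` of the items `1, ..., i - 1` are zeros preceded by a `1`. Conditioning on `t_{i-1}` gives
`Q_i(k) = p_{i-1} * Q_{i-1}(k) + (1 - p_{i-1}) * Q_{i-1}(k - 1)` for `k ≥ 2`: a zero at `i - 1` is
counted unless no `1` precedes it, and in that case the count is `0` both with and without item
`i - 1`, whereas `k` and `k - 1` are positive. Finally `P_{i-1}(m, i - 1) = p_{i-1} * Q_{i-1}(m)`.
-/

/-- Probability of the transaction `t` under independent Bernoulli coordinates, where item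
`l ∈ {1,...,N}` (coordinate `l-1`) takes value `1` with probability `p l`. -/
noncomputable def bernProb (N : ℕ) (p : ℕ → ℝ) (t : Fin N → Bool) : ℝ :=
  ∏ l : Fin N, if t l = true then p ((l : ℕ) + 1) else 1 - p ((l : ℕ) + 1)

/-- The lazarus count of the restriction of `t` to its first `i` coordinates
(items `1,...,i`): the number of zeros lying strictly between two ones, all within the
first `i` coordinates. -/
def lazTo (N : ℕ) (t : Fin N → Bool) (i : ℕ) : ℕ :=
  (Finset.univ.filter fun l : Fin N =>
    (l : ℕ) + 1 ≤ i ∧ t l = false ∧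
      ∃ a b : Fin N, (b : ℕ) + 1 ≤ i ∧ a < l ∧ l < b ∧ t a = true ∧ t b = true).card

/-- The last one-position (in `{1,...,i}`, or `0` if none) of the restriction of `t` to its
first `i` coordinates. -/
def lastTo (N : ℕ) (t : Fin N → Bool) (i : ℕ) : ℕ :=
  (Finset.univ.filter fun l : Fin N => (l : ℕ) + 1 ≤ i ∧ t l = true).sup fun l => (l : ℕ) + 1

/-- `P_i(k, j)`: the probability that, among the first `i` coordinates, the lazarus count
equals `k` and the last one-position equals `j`. -/
noncomputable def lazLastProb (N : ℕ) (p : ℕ → ℝ) (i k j : ℕ) : ℝ :=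
  ∑ t ∈ Finset.univ.filter
      (fun t : Fin N → Bool => lazTo N t i = k ∧ lastTo N t i = j),
    bernProb N p t

section LazarusBefore

variable {ι : Type*} [LinearOrder ι] [LocallyFiniteOrderBot ι]

/-- The zeros of `t` strictly before `d` that are preceded by a one: the positions that are lazarus
in the restriction of `t` to the coordinates up to `d` as soon as `t d = true`. -/
def lazarusBefore (t : ι → Bool) (d : ι) : Finset ι :=
  {l ∈ Finset.Iio d | t l = false ∧ ∃ a ∈ Finset.Iio l, t a = true}

lemma mem_lazarusBefore {t : ι → Bool} {d l : ι} :
    l ∈ lazarusBefore t d ↔ l < d ∧ t l = false ∧ ∃ a < l, t a = true := by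
  simp only [lazarusBefore, Finset.mem_filter, Finset.mem_Iio]

lemma lazarusBefore_congr {s t : ι → Bool} {d : ι} (h : ∀ l < d, s l = t l) :
    lazarusBefore s d = lazarusBefore t d := by
  ext l
  simp only [mem_lazarusBefore]
  refine and_congr_right fun hl => ?_
  rw [h l hl]
  exact and_congr_right fun _ => exists_congr fun a => and_congr_right fun ha => by
    rw [h a (ha.trans hl)]

lemma lazarusBefore_update_self (t : ι → Bool) (d : ι) (b : Bool) :
    lazarusBefore (Function.update t d b) d = lazarusBefore t d :=
  lazarusBefore_congr fun _ hl => Function.update_of_ne hl.ne b t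

lemma lazarusBefore_of_covBy (t : ι → Bool) {c d : ι} (h : c ⋖ d) :
    lazarusBefore t d = if t c = false ∧ ∃ a ∈ Finset.Iio c, t a = true
      then insert c (lazarusBefore t c) else lazarusBefore t c := by
  have hIio : Finset.Iio d = insert c (Finset.Iio c) := by
    ext l
    rw [Finset.mem_Iio, h.lt_iff_le_left, Finset.mem_insert, Finset.mem_Iio, le_iff_eq_or_lt]
  rw [lazarusBefore, hIio, Finset.filter_insert, lazarusBefore]

lemma lazarusBefore_update_true (t : ι → Bool) {c d : ι} (h : c ⋖ d) :
    lazarusBefore (Function.update t c true) d = lazarusBefore t c := by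
  rw [lazarusBefore_of_covBy _ h, if_neg (by simp), lazarusBefore_update_self]

lemma lazarusBefore_eq_empty {t : ι → Bool} {d : ι} (h : ¬∃ a < d, t a = true) :
    lazarusBefore t d = ∅ :=
  Finset.eq_empty_of_forall_notMem fun _ hl =>
    have ⟨hld, _, a, hal, ha⟩ := mem_lazarusBefore.1 hl
    h ⟨a, hal.trans hld, ha⟩

lemma card_lazarusBefore_update_false_eq_succ_iff (t : ι → Bool) {c d : ι} (h : c ⋖ d) {m : ℕ}
    (hm : m ≠ 0) :
    (lazarusBefore (Function.update t c false) d).card = m + 1 ↔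
      (lazarusBefore t c).card = m := by
  have hprev : (∃ a ∈ Finset.Iio c, Function.update t c false a = true) ↔ ∃ a < c, t a = true :=
    exists_congr fun a => by
      rw [Finset.mem_Iio]
      exact and_congr_right fun ha => by rw [Function.update_of_ne ha.ne]
  rw [lazarusBefore_of_covBy _ h, lazarusBefore_update_self, Function.update_self]
  by_cases hone : ∃ a < c, t a = true
  · have hc : c ∉ lazarusBefore t c := fun hc => (mem_lazarusBefore.1 hc).1.false
    rw [if_pos ⟨rfl, hprev.2 hone⟩, Finset.card_insert_of_notMem hc, Nat.add_right_cancel_iff]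
  · rw [if_neg fun h => hone (hprev.1 h.2), lazarusBefore_eq_empty hone, Finset.card_empty]
    omega

end LazarusBefore

section Statistics

variable {N : ℕ} {t : Fin N → Bool} {d : Fin N}

lemma lazTo_of_apply_eq_true (hd : t d = true) :
    lazTo N t (d + 1) = (lazarusBefore t d).card := by
  unfold lazTo
  congr 1
  ext l
  simp only [Finset.mem_filter, Finset.mem_univ, true_and, mem_lazarusBefore]
  constructor
  · rintro ⟨-, hl, a, b, hb, hal, hlb, ha, -⟩
    exact ⟨hlb.trans_le (Nat.le_of_lt_succ hb), hl, a, hal, ha⟩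
  · rintro ⟨hld, hl, a, hal, ha⟩
    exact ⟨Nat.succ_le_succ hld.le, hl, a, d, le_rfl, hal, hld, ha, hd⟩

lemma lastTo_le (t : Fin N → Bool) (i : ℕ) : lastTo N t i ≤ i :=
  Finset.sup_le fun _ hl => (Finset.mem_filter.1 hl).2.1

lemma lastTo_eq_self_iff : lastTo N t (d + 1) = d + 1 ↔ t d = true := by
  rw [← (lastTo_le t _).ge_iff_eq, lastTo, Finset.le_sup_iff (Nat.succ_pos d)]
  constructor
  · rintro ⟨l, hl, hdl⟩
    obtain ⟨-, hld, hone⟩ := Finset.mem_filter.1 hl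
    rwa [Fin.ext (Nat.succ_injective (hdl.antisymm hld))]
  · exact fun hd => ⟨d, Finset.mem_filter.2 ⟨Finset.mem_univ d, le_rfl, hd⟩, le_rfl⟩

lemma lazTo_eq_and_lastTo_eq_iff {k : ℕ} :
    lazTo N t (d + 1) = k ∧ lastTo N t (d + 1) = d + 1 ↔
      t d = true ∧ (lazarusBefore t d).card = k := by
  rw [lastTo_eq_self_iff, and_comm]
  exact and_congr_right fun hd => by rw [lazTo_of_apply_eq_true hd]

end Statistics

section Probability

/-- The probability of the event `E` under the product Bernoulli weights `bernProb N p`. -/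
noncomputable def bernEventProb {N : ℕ} (p : ℕ → ℝ) (E : (Fin N → Bool) → Prop)
    [DecidablePred E] : ℝ :=
  ∑ t with E t, bernProb N p t

lemma bernProb_insertNth {n : ℕ} (p : ℕ → ℝ) (d : Fin (n + 1)) (b : Bool) (s : Fin n → Bool) :
    bernProb (n + 1) p (d.insertNth b s) = (if b = true then p (d + 1) else 1 - p (d + 1)) *
      ∏ l, if s l = true then p (d.succAbove l + 1) else 1 - p (d.succAbove l + 1) := by
  simp only [bernProb, Fin.prod_univ_succAbove _ d, Fin.insertNth_apply_same,
    Fin.insertNth_apply_succAbove]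

lemma sum_eq_sum_insertNth {M : Type*} [AddCommMonoid M] {n : ℕ} (d : Fin (n + 1))
    (F : (Fin (n + 1) → Bool) → M) :
    ∑ t, F t = ∑ s, (F (d.insertNth true s) + F (d.insertNth false s)) := by
  rw [← (Fin.insertNthEquiv (fun _ => Bool) d).sum_comp, Fintype.sum_prod_type_right]
  exact Finset.sum_congr rfl fun _ _ => Fintype.sum_bool _

lemma bernEventProb_eq_add_update {N : ℕ} (p : ℕ → ℝ) (d : Fin N) (E : (Fin N → Bool) → Prop)
    [DecidablePred E] :
    bernEventProb p E = p (d + 1) * bernEventProb p (fun t => E (Function.update t d true)) +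
      (1 - p (d + 1)) * bernEventProb p (fun t => E (Function.update t d false)) := by
  cases N with
  | zero => exact d.elim0
  | succ n =>
    simp only [bernEventProb, Finset.sum_filter, sum_eq_sum_insertNth d, Fin.update_insertNth,
      bernProb_insertNth, Finset.mul_sum, ← Finset.sum_add_distrib, reduceIte,
      Bool.false_eq_true]
    refine Finset.sum_congr rfl fun s _ => ?_
    split_ifs <;> ring

variable {N : ℕ} (p : ℕ → ℝ)

lemma lazLastProb_self (d : Fin N) (k : ℕ) :
    lazLastProb N p (d + 1) k (d + 1) =
      p (d + 1) * bernEventProb p fun t => (lazarusBefore t d).card = k := by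
  calc lazLastProb N p (d + 1) k (d + 1)
      = bernEventProb p fun t => t d = true ∧ (lazarusBefore t d).card = k :=
        Finset.sum_congr (Finset.filter_congr fun _ _ => lazTo_eq_and_lastTo_eq_iff) fun _ _ => rfl
    _ = p (d + 1) * bernEventProb p fun t => (lazarusBefore t d).card = k := by
        rw [bernEventProb_eq_add_update p d]
        simp [lazarusBefore_update_self, bernEventProb]

lemma bernEventProb_card_lazarusBefore_eq_succ {c d : Fin N} (h : c ⋖ d) {m : ℕ} (hm : m ≠ 0) :
    bernEventProb p (fun t => (lazarusBefore t d).card = m + 1) =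
      p (c + 1) * bernEventProb p (fun t => (lazarusBefore t c).card = m + 1) +
        (1 - p (c + 1)) * bernEventProb p (fun t => (lazarusBefore t c).card = m) := by
  rw [bernEventProb_eq_add_update p c]
  simp only [lazarusBefore_update_true _ h, card_lazarusBefore_update_false_eq_succ_iff _ h hm]

end Probability

theorem lazarus_recurrence_constant_size_general (N : ℕ) (p : ℕ → ℝ) (i k : ℕ) (hi : 2 ≤ i)
    (hiN : i ≤ N) (hpi : p (i - 1) ≠ 0) (hk : 2 ≤ k) :
    lazLastProb N p i k i
      = p i * lazLastProb N p (i - 1) k (i - 1)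
        + p i * ((1 - p (i - 1)) / p (i - 1)) * lazLastProb N p (i - 1) (k - 1) (i - 1) := by
  obtain ⟨n, rfl⟩ := Nat.exists_eq_add_of_le' hi
  obtain ⟨m, rfl⟩ := Nat.exists_eq_add_of_le' (one_le_two.trans hk)
  let c : Fin N := ⟨n, by omega⟩
  let d : Fin N := ⟨n + 1, by omega⟩
  have hcd : c ⋖ d := Fin.covBy_iff.2 (Nat.covBy_iff_add_one_eq.2 rfl)
  change p (c + 1) ≠ 0 at hpi
  change lazLastProb N p (d + 1) (m + 1) (d + 1) =
    p (d + 1) * lazLastProb N p (c + 1) (m + 1) (c + 1) +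
      p (d + 1) * ((1 - p (c + 1)) / p (c + 1)) * lazLastProb N p (c + 1) m (c + 1)
  rw [lazLastProb_self, lazLastProb_self, lazLastProb_self,
    bernEventProb_card_lazarusBefore_eq_succ p hcd (by omega)]
  field_simp

/-- the constant-size form of the lazarus recurrence, for `i ≥ 3`,
`p_{i-1} > 0` and `2 ≤ k ≤ i - 2`:
`P_i(k, i) = p_i · P_{i-1}(k, i-1) + p_i · ((1 - p_{i-1})/p_{i-1}) · P_{i-1}(k-1, i-1)`. -/
theorem lazarus_recurrence_constant_size (N : ℕ) (p : ℕ → ℝ)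
    (hp : ∀ l, 1 ≤ l → l ≤ N → 0 ≤ p l ∧ p l ≤ 1)
    (i k : ℕ) (hi3 : 3 ≤ i) (hiN : i ≤ N) (hpi : 0 < p (i - 1))
    (hk2 : 2 ≤ k) (hki : k ≤ i - 2) :
    lazLastProb N p i k i
      = p i * lazLastProb N p (i - 1) k (i - 1)
        + p i * ((1 - p (i - 1)) / p (i - 1)) * lazLastProb N p (i - 1) (k - 1) (i - 1) :=
  lazarus_recurrence_constant_size_general N p i k (by omega) hiN hpi.ne' hk2
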